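/- arXiv:2504.00177 — 2 statements merged into one kernel-verified Lean document; each statement's English description precedes it below -/
import Mathlib

section
/- For every integer n ≥ 0, the Baumslag–Gersten group BG(n+2, n) = ⟨a, t ∣ t a t⁻¹ a^{n+2} t a⁻¹ t⁻¹ = a^n⟩ has a subgroup Γ' of index 2 whose abelianization A has no ℤ/2 direct summand, i.e. every x ∈ A with 2x = 0 satisfies x = 2y for some y ∈ A. -/
/-- The relator `t a t⁻¹ a^m t a⁻¹ t⁻¹ a^{-n}` of the Baumslag–Gersten group, in the
free group on two generators, where `a` is `FreeGroup.of 0` and `t` is `FreeGroup.of 1`. -/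
def BGRel (m n : ℤ) : FreeGroup (Fin 2) :=
  FreeGroup.of 1 * FreeGroup.of 0 * (FreeGroup.of 1)⁻¹ * FreeGroup.of 0 ^ m *
    FreeGroup.of 1 * (FreeGroup.of 0)⁻¹ * (FreeGroup.of 1)⁻¹ * FreeGroup.of 0 ^ (-n)

/-- The Baumslag–Gersten group `BG(m,n) = ⟨a, t ∣ t a t⁻¹ a^m t a⁻¹ t⁻¹ = a^n⟩`. -/
abbrev BG (m n : ℤ) : Type :=
  PresentedGroup ({BGRel m n} : Set (FreeGroup (Fin 2)))


/-!
Let `m ≡ n + 2` modulo 4 and let `H` be the index two subgroup of `BG m n` of the elements of even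
exponent sum in `a`. Its abelianization `A` is generated by the classes of `t`, `a * t * a⁻¹` and
`a ^ 2`. Put `c = t * (a * t * a⁻¹)⁻¹`. The relation says `c * a ^ m * c⁻¹ = a ^ n`, so
`a ^ (m - n)` is the commutator of `a ^ m` and `c`. As conjugation by `a` inverts the class of `c`,
this commutator is a square in `A`; since `(m - n) / 2` is odd, so is `a ^ 2`.

Hence `t` and `a * t * a⁻¹` generate `A` modulo squares. A homomorphism from `BG m n` to the wreath
product of `ℤ/4` by `ℤ/2` induces a homomorphism from `A` to `(ℤ/4)²` sending these two classes to
the standard basis, so an element of `A` whose square is trivial has even exponents in both of them.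
-/

open Abelianization MulAut Subgroup

/-- A group is `2`-avoiding if its abelianization has no direct summand `ℤ/2`, expressed as: every
element of order dividing two in the abelianization is a square. -/
def IsTwoAvoiding (G : Type*) [Group G] : Prop :=
  ∀ x : Abelianization G, x ^ 2 = 1 → ∃ y : Abelianization G, x = y ^ 2

section CommGroup

variable {A : Type*} [CommGroup A] {u v : A}

theorem even_of_sq_zpow_mul_eq_one {f : A →* Multiplicative (ZMod 4)}
    (hu : f u = Multiplicative.ofAdd 1) {y : A} (hy : IsSquare (f y)) {p : ℤ}
    (h : (u ^ p * y) ^ 2 = 1) : Even p := by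
  obtain ⟨z, hz⟩ := hy
  have hz4 : z ^ 4 = 1 := (by decide : ∀ z : Multiplicative (ZMod 4), z ^ 4 = 1) z
  have hp : Multiplicative.ofAdd (1 : ZMod 4) ^ (p * 2) = 1 := by
    rw [← map_one f, ← h, mul_pow, map_mul, map_pow, map_pow, map_zpow, hu, hz, ← sq, ← pow_mul,
      hz4, mul_one, zpow_mul, zpow_ofNat]
  have hdvd : (4 : ℤ) ∣ p * 2 := by
    rw [← ofAdd_zsmul, ofAdd_eq_one, zsmul_one] at hp
    exact_mod_cast (ZMod.intCast_zmod_eq_zero_iff_dvd _ 4).mp hp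
  exact even_iff_two_dvd.mpr (by omega)

theorem isSquare_of_sq_eq_one_of_characters {χ ψ : A →* Multiplicative (ZMod 4)}
    (hχu : χ u = Multiplicative.ofAdd 1) (hχv : χ v = 1)
    (hψu : ψ u = 1) (hψv : ψ v = Multiplicative.ofAdd 1)
    {p q : ℤ} {s : A} (hs : IsSquare s) (h : (u ^ p * (v ^ q * s)) ^ 2 = 1) :
    IsSquare (u ^ p * (v ^ q * s)) := by
  have hp : Even p := even_of_sq_zpow_mul_eq_one hχu (by simpa [hχv] using hs.map χ) h
  rw [mul_left_comm] at h
  have hq : Even q := even_of_sq_zpow_mul_eq_one hψv (by simpa [hψu] using hs.map ψ) h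
  exact (hp.isSquare_zpow u).mul ((hq.isSquare_zpow v).mul hs)

end CommGroup

section IndexTwo

variable {G : Type*} [Group G] {H : Subgroup G} [H.Normal] {a : G}

theorem closure_union_conjNormal_union_sq_eq_top (hH : H.index = 2) (ha : a ∉ H) {s : Set H}
    (hs : Subgroup.closure (insert a ((↑) '' s)) = ⊤) :
    Subgroup.closure (s ∪ conjNormal a '' s ∪ {⟨a ^ 2, sq_mem_of_index_two hH a⟩}) = ⊤ := by
  set C := Subgroup.closure (s ∪ conjNormal a '' s ∪ {⟨a ^ 2, sq_mem_of_index_two hH a⟩})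
  have hsq : ⟨a ^ 2, sq_mem_of_index_two hH a⟩ ∈ C := subset_closure (by simp)
  have hmem {x : H} (hx : x ∈ s) : x ∈ C := subset_closure (by simp [hx])
  have hconj {x : H} (hx : x ∈ s) : conjNormal a x ∈ C :=
    subset_closure (Or.inl (Or.inr (Set.mem_image_of_mem _ hx)))
  have hcoset (g : G) : ∃ h ∈ C, g = h ∨ g = h * a := by
    have hg : g ∈ Subgroup.closure (insert a ((↑) '' s)) := hs ▸ mem_top g
    induction hg using closure_induction_right with
    | one => exact ⟨1, one_mem C, Or.inl rfl⟩
    | mul_right g _ y hy ih =>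
      obtain ⟨h, hh, rfl | rfl⟩ := ih <;> obtain rfl | ⟨x, hx, rfl⟩ := hy
      · exact ⟨h, hh, Or.inr rfl⟩
      · exact ⟨h * x, mul_mem hh (hmem hx), Or.inl rfl⟩
      · exact ⟨_, mul_mem hh hsq, Or.inl (by simp [sq, mul_assoc])⟩
      · exact ⟨_, mul_mem hh (hconj hx), Or.inr (by simp [mul_assoc])⟩
    | mul_inv_cancel g _ y hy ih =>
      obtain ⟨h, hh, rfl | rfl⟩ := ih <;> obtain rfl | ⟨x, hx, rfl⟩ := hy
      · exact ⟨_, mul_mem hh (inv_mem hsq), Or.inr (by simp [sq, mul_assoc])⟩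
      · exact ⟨h * x⁻¹, mul_mem hh (inv_mem (hmem hx)), Or.inl rfl⟩
      · exact ⟨h, hh, Or.inl (by simp)⟩
      · exact ⟨_, mul_mem hh (inv_mem (hconj hx)), Or.inr (by simp [mul_assoc])⟩
  refine (eq_top_iff' C).mpr fun g => ?_
  obtain ⟨h, hh, hg | hg⟩ := hcoset g
  · rwa [Subtype.ext hg]
  · exact absurd ((H.mul_mem_cancel_left h.2).mp (hg ▸ g.2)) ha

theorem exists_isSquare_eq_zpow_mul (hH : H.index = 2) (ha : a ∉ H) {u : H}
    (hgen : Subgroup.closure {a, (u : G)} = ⊤)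
    (hsq : IsSquare (of (⟨a ^ 2, sq_mem_of_index_two hH a⟩ : H))) (x : Abelianization H) :
    ∃ (p q : ℤ) (s : Abelianization H), IsSquare s ∧
      x = of u ^ p * (of (conjNormal a u) ^ q * s) := by
  have htop := closure_union_conjNormal_union_sq_eq_top hH ha (s := {u}) (by simpa using hgen)
  have hx : x ∈ (⊤ : Subgroup H).map of := by
    rw [map_top_of_surjective _ QuotientGroup.mk_surjective]
    exact mem_top x
  rw [← htop, MonoidHom.map_closure] at hx
  simp only [Set.image_union, Set.image_singleton, Set.union_assoc, Subgroup.closure_union, mem_sup,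
    mem_closure_singleton] at hx
  obtain ⟨_, ⟨p, rfl⟩, _, ⟨_, ⟨q, rfl⟩, _, ⟨k, rfl⟩, rfl⟩, rfl⟩ := hx
  exact ⟨p, q, _, hsq.zpow k, rfl⟩

theorem of_conjNormal_of_mem {g : G} (hg : g ∈ H) (x : H) : of (conjNormal g x) = of x := by
  have h : conjNormal g x = ⟨g, hg⟩ * x * ⟨g, hg⟩⁻¹ := Subtype.ext (conjNormal_apply g x)
  rw [h, map_mul, map_mul, map_inv, mul_inv_cancel_comm]

theorem of_conjNormal_eq_of_notMem (hH : H.index = 2) {g : G} (hg : g ∉ H) (ha : a ∉ H) (x : H) :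
    of (conjNormal g x) = of (conjNormal a x) := by
  have hga : g * a⁻¹ ∈ H := by simp [mul_mem_iff_of_index_two hH, hg, ha]
  rw [← of_conjNormal_of_mem hga (conjNormal a x), ← mul_apply, ← map_mul, inv_mul_cancel_right]

theorem of_conjNormal_conjNormal (hH : H.index = 2) (x : H) :
    of (conjNormal a (conjNormal a x)) = of x := by
  rw [← mul_apply, ← map_mul, of_conjNormal_of_mem (mul_self_mem_of_index_two hH a)]

theorem isSquare_of_conjNormal_div (hH : H.index = 2) (ha : a ∉ H) (g : G) (x : H) :
    IsSquare (of (conjNormal g (x / conjNormal a x) / (x / conjNormal a x))) := by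
  by_cases hg : g ∈ H
  · rw [map_div, of_conjNormal_of_mem hg, div_self']
    exact IsSquare.one
  · have hinv : of (conjNormal g (x / conjNormal a x)) = of (conjNormal a x / x) := by
      rw [of_conjNormal_eq_of_notMem hH hg ha, map_div, map_div, map_div,
        of_conjNormal_conjNormal hH]
    refine ⟨of (conjNormal a x / x), ?_⟩
    rw [map_div, hinv, ← inv_div (conjNormal a x) x, map_inv, div_inv_eq_mul]

theorem isSquare_of_sq_of_conj_zpow_eq (hH : H.index = 2) (ha : a ∉ H) {u : H} {m n r : ℤ}
    (hr : Odd r) (hmn : m - n = 2 * r)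
    (hrel : u * a * (u : G)⁻¹ * a ^ m * (u * a * (u : G)⁻¹)⁻¹ = a ^ n) :
    IsSquare (of (⟨a ^ 2, sq_mem_of_index_two hH a⟩ : H)) := by
  set w : H := ⟨a ^ 2, sq_mem_of_index_two hH a⟩
  let c : H := u / conjNormal a u
  have hconj : c * a ^ m * (c : G)⁻¹ = a ^ n := by
    have hc : (c : G) = u * a * (u : G)⁻¹ * a⁻¹ := by
      simp [c, div_eq_mul_inv, mul_assoc]
    rw [← hrel, hc]
    group
  have hcomm : conjNormal (a ^ m) c / c = w ^ r := by
    apply Subtype.ext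
    calc ((conjNormal (a ^ m) c / c : H) : G)
        = a ^ m * (c * a ^ m * (c : G)⁻¹)⁻¹ := by
          rw [Subgroup.coe_div, conjNormal_apply, div_eq_mul_inv]
          group
      _ = a ^ (m - n) := by rw [hconj, zpow_sub]
      _ = (w ^ r : H) := by rw [hmn, zpow_mul, Subgroup.coe_zpow, zpow_ofNat]
  have hw_zpow : IsSquare (of w ^ r) := by
    rw [← map_zpow, ← hcomm]
    exact isSquare_of_conjNormal_div hH ha (a ^ m) u
  have hw : of w = of w ^ r * of w ^ (1 - r) := by rw [← zpow_add, add_sub_cancel, zpow_one]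
  rw [hw]
  exact hw_zpow.mul ((odd_one.sub_odd hr).isSquare_zpow _)

end IndexTwo

section WreathProduct

variable {G D Q : Type*} [Group G] [Group Q]

/-- The preimage of the base group `Q → D` under a homomorphism into the wreath product `D ≀ᵣ Q`. -/
abbrev basePreimage [Group D] (F : G →* D ≀ᵣ Q) : Subgroup G :=
  (RegularWreathProduct.rightHom.comp F).ker

/-- The restriction of a homomorphism into a wreath product `D ≀ᵣ Q` to the preimage of the base
group, with values in the base group. -/
def restrictBase [Group D] (F : G →* D ≀ᵣ Q) : basePreimage F →* (Q → D) where
  toFun g := (F g).left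
  map_one' := by simp
  map_mul' g h := by
    have hg : (F g).right = 1 := g.2
    simp [hg]

theorem restrictBase_apply [Group D] (F : G →* D ≀ᵣ Q) (g : basePreimage F) :
    restrictBase F g = (F g).left :=
  rfl

theorem restrictBase_conjNormal [CommGroup D] (F : G →* D ≀ᵣ Q) (a : G) (g : basePreimage F)
    (i : Q) : restrictBase F (conjNormal a g) i = restrictBase F g ((F a).right⁻¹ * i) := by
  have hg : (F g).right = 1 := g.2
  simp [restrictBase_apply, hg]

theorem index_basePreimage_of_right_surjective [Group D] {F : G →* D ≀ᵣ Q}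
    (hF : Function.Surjective fun g => (F g).right) : (basePreimage F).index = Nat.card Q := by
  rw [Subgroup.index_ker, MonoidHom.range_eq_top.mpr hF, Subgroup.card_top]

end WreathProduct

/-- The wreath product of the cyclic group of order four by the cyclic group of order two. -/
abbrev CyclicWreath : Type :=
  Multiplicative (ZMod 4) ≀ᵣ Multiplicative (ZMod 2)

namespace CyclicWreath

/-- A generator of the first of the two cyclic factors of order four of the base group. -/
def baseGen : CyclicWreath :=
  ⟨Pi.mulSingle 1 (Multiplicative.ofAdd 1), 1⟩

theorem exists_conj_zpow_eq {m n : ℤ} (hmn : m ≡ n + 2 [ZMOD 4]) :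
    ∃ x : CyclicWreath, x.right = Multiplicative.ofAdd 1 ∧
      baseGen * x * baseGen⁻¹ * x ^ m * (baseGen * x * baseGen⁻¹)⁻¹ = x ^ n := by
  have hmod : m % 4 = (n + 2) % 4 := hmn
  obtain hn | hn := n.even_or_odd
  · refine ⟨RegularWreathProduct.inl (Multiplicative.ofAdd 1), rfl, ?_⟩
    set x : CyclicWreath := RegularWreathProduct.inl (Multiplicative.ofAdd 1)
    have hsq : x ^ 2 = 1 := by ext1 <;> decide
    have hpow {k : ℤ} (hk : Even k) : x ^ k = 1 := by
      obtain ⟨j, rfl⟩ := hk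
      rw [← two_mul, zpow_mul, zpow_ofNat, hsq, one_zpow]
    have hm : Even m := by grind
    rw [hpow hm, hpow hn, mul_one, mul_inv_cancel]
  · refine ⟨⟨Pi.mulSingle 1 (Multiplicative.ofAdd 2), Multiplicative.ofAdd 1⟩, rfl, ?_⟩
    set x : CyclicWreath := ⟨Pi.mulSingle 1 (Multiplicative.ofAdd 2), Multiplicative.ofAdd 1⟩
    have hpow : x ^ 4 = 1 := by ext1 <;> decide
    have hconj : baseGen * x * baseGen⁻¹ * x * (baseGen * x * baseGen⁻¹)⁻¹ = x⁻¹ := by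
      ext1 <;> decide
    obtain ⟨k, hk⟩ : ∃ k, -m = n + 4 * k := ⟨(-m - n) / 4, by grind⟩
    rw [← conj_zpow, hconj, inv_zpow', hk, zpow_add, zpow_mul, zpow_ofNat, hpow, one_zpow, mul_one]

end CyclicWreath

section Criterion

variable {G : Type*} [Group G] {a t : G} {F : G →* CyclicWreath}

theorem index_basePreimage_eq_two (ha : (F a).right = Multiplicative.ofAdd 1) :
    (basePreimage F).index = 2 := by
  rw [index_basePreimage_of_right_surjective, Nat.card_eq_fintype_card]
  · rfl
  · have hcases : ∀ i : Multiplicative (ZMod 2), i = 1 ∨ i = Multiplicative.ofAdd 1 := by decide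
    intro i
    obtain rfl | rfl := hcases i
    · exact ⟨1, by simp⟩
    · exact ⟨a, ha⟩

theorem isTwoAvoiding_basePreimage (hgen : Subgroup.closure {a, t} = ⊤)
    (ha : (F a).right = Multiplicative.ofAdd 1) (ht : F t = CyclicWreath.baseGen) {m n r : ℤ}
    (hr : Odd r) (hmn : m - n = 2 * r)
    (hrel : t * a * t⁻¹ * a ^ m * (t * a * t⁻¹)⁻¹ = a ^ n) :
    IsTwoAvoiding (basePreimage F) := by
  intro x hx
  have hindex : (basePreimage F).index = 2 := index_basePreimage_eq_two ha
  have ha_notMem : a ∉ basePreimage F := by simp [MonoidHom.mem_ker, ha]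
  have ht_mem : t ∈ basePreimage F := by simp [MonoidHom.mem_ker, ht, CyclicWreath.baseGen]
  let u : basePreimage F := ⟨t, ht_mem⟩
  have hsq := isSquare_of_sq_of_conj_zpow_eq hindex ha_notMem (u := u) hr hmn hrel
  obtain ⟨p, q, s, hs, rfl⟩ := exists_isSquare_eq_zpow_mul hindex ha_notMem (u := u) hgen hsq x
  let χ (i : Multiplicative (ZMod 2)) := lift ((Pi.evalMonoidHom _ i).comp (restrictBase F))
  have hχ_u i : χ i (of u) = CyclicWreath.baseGen.left i := by
    simp [χ, u, restrictBase_apply, ht]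
  have hχ_conj i : χ i (of (conjNormal a u)) =
      CyclicWreath.baseGen.left ((Multiplicative.ofAdd 1)⁻¹ * i) := by
    rw [lift_apply_of, MonoidHom.comp_apply, Pi.evalMonoidHom_apply, restrictBase_conjNormal,
      restrictBase_apply, ht, ha]
  have hsquare := isSquare_of_sq_eq_one_of_characters (χ := χ 1) (ψ := χ (Multiplicative.ofAdd 1))
    (by rw [hχ_u]; decide) (by rw [hχ_conj]; decide) (by rw [hχ_u]; decide)
    (by rw [hχ_conj]; decide) hs hx
  exact hsquare.exists_sq

end Criterion

namespace BG

variable (m n : ℤ)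

/-- The generator `a` of `BG m n`. -/
def a : BG m n := PresentedGroup.of 0

/-- The generator `t` of `BG m n`. -/
def t : BG m n := PresentedGroup.of 1

theorem closure_a_t : Subgroup.closure {a m n, t m n} = ⊤ := by
  rw [← PresentedGroup.closure_range_of {BGRel m n}]
  congr 1
  ext g
  simp [a, t, Fin.exists_fin_two, eq_comm]

theorem conj_a_zpow :
    t m n * a m n * (t m n)⁻¹ * a m n ^ m * (t m n * a m n * (t m n)⁻¹)⁻¹ = a m n ^ n := by
  have hrel : t m n * a m n * (t m n)⁻¹ * a m n ^ m * t m n * (a m n)⁻¹ * (t m n)⁻¹ *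
      a m n ^ (-n) = 1 := PresentedGroup.one_of_mem (rels := {BGRel m n}) rfl
  simpa only [zpow_neg, mul_inv_eq_one, mul_inv_rev, inv_inv, ← mul_assoc] using hrel

variable {m n} {G : Type*} [Group G] {x y : G}
  (h : y * x * y⁻¹ * x ^ m * (y * x * y⁻¹)⁻¹ = x ^ n)

/-- The homomorphism out of `BG m n` sending `a` to `x` and `t` to `y`. -/
def lift : BG m n →* G :=
  PresentedGroup.toGroup (f := ![x, y]) (by
    rintro _ rfl
    simpa [BGRel, mul_assoc] using mul_inv_eq_one.mpr h)

@[simp]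
theorem lift_a : lift h (a m n) = x := by simp [lift, a]

@[simp]
theorem lift_t : lift h (t m n) = y := by simp [lift, t]

end BG

theorem stmt_16_general {m n : ℤ} (hmn : m ≡ n + 2 [ZMOD 4]) :
    ∃ Γ' : Subgroup (BG m n), Γ'.index = 2 ∧ IsTwoAvoiding Γ' := by
  obtain ⟨x, hx, hrel⟩ := CyclicWreath.exists_conj_zpow_eq hmn
  have ha : (BG.lift hrel (BG.a m n)).right = Multiplicative.ofAdd 1 := by rwa [BG.lift_a]
  obtain ⟨k, hk⟩ : ∃ k, m - n = 2 * (2 * k + 1) := by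
    obtain ⟨k, hk⟩ := hmn.symm.dvd
    exact ⟨k, by lia⟩
  exact ⟨basePreimage (BG.lift hrel), index_basePreimage_eq_two ha,
    isTwoAvoiding_basePreimage (BG.closure_a_t m n) ha (BG.lift_t hrel) ⟨k, rfl⟩ hk
      (BG.conj_a_zpow m n)⟩

theorem stmt_16 (n : ℤ) (hn : 0 ≤ n) :
    ∃ Γ' : Subgroup (BG (n + 2) n), Γ'.index = 2 ∧
      ∀ x : Abelianization ↥Γ', x ^ 2 = 1 → ∃ y : Abelianization ↥Γ', x = y ^ 2 :=
  stmt_16_general rfl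
end

section
/- Let n ≥ 2 and let k_1, …, k_n be integers with k_i ≥ 1 for all i and gcd(k_1, …, k_n) = 2. Let Γ = ⟨s_1, …, s_n ∣ s_1^{k_1} s_2^{k_2} ⋯ s_n^{k_n}⟩ be the Meskin group, let θ : Γ → ℤ/2 be the group homomorphism determined by θ(s_i) = 1 for every i (well defined since every k_i is even, so the relator has even total exponent sum), and let Γ' = ker θ. Then Γ' has index 2 in Γ and the abelianization of Γ' is isomorphic to ℤ^{2n−2}, the free abelian group of rank 2n−2. -/
/-- The relator `s_1^{k_1} s_2^{k_2} ⋯ s_n^{k_n}` of the Meskin group, in the free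
group on `n` generators, where `s_i` is `FreeGroup.of i`. -/
def MeskinRel (n : ℕ) (k : Fin n → ℤ) : FreeGroup (Fin n) :=
  ((List.finRange n).map fun i => FreeGroup.of i ^ k i).prod

/-- The Meskin group `⟨s_1, …, s_n ∣ s_1^{k_1} s_2^{k_2} ⋯ s_n^{k_n}⟩`. -/
abbrev Meskin (n : ℕ) (k : Fin n → ℤ) : Type :=
  PresentedGroup ({MeskinRel n k} : Set (FreeGroup (Fin n)))

/-!
Fix `t = s_i` and write `c` for the generator of the cyclic group `C_N`. Homomorphisms from `ker θ`
to an abelian group `A` correspond (Krasner–Kaloujnine) to homomorphisms from `Γ` to the wreath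
product of `A` with `C_N` that lie over `θ` and are trivial at coset `q` on `t ^ q`; such a
homomorphism is given by elements `s_j ↦ (x_j, c)` with `x_{i,q} = 1` for `q ≠ 1`. When
`k_j = N m_j`, the power `s_j ^ k_j` goes to the constant function `(∏_q x_{j,q}) ^ m_j`, so the
relator imposes the single condition `∏_{j,q} x_{j,q} ^ m_j = 1`. Hence the abelianization of
`ker θ` is free abelian on the `Nn - N + 1` remaining generators modulo one vector, which is
`d = gcd(m_1, …, m_n)` times a unimodular one, and the quotient is `ℤ^{Nn - N} × ℤ/d`.
-/

section WreathProduct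

variable {G Q A B : Type*} [Group G] [Group Q] [Group A] [Group B]

/-- The homomorphism of regular wreath products induced by a homomorphism of the base groups. -/
def wreathMap (f : A →* B) : A ≀ᵣ Q →* B ≀ᵣ Q where
  toFun g := ⟨f ∘ g.left, g.right⟩
  map_one' := by ext <;> simp
  map_mul' g h := by ext <;> simp

/-- The diagonal embedding of a group as the constant functions in its wreath product. -/
def wreathDiagonal (A Q : Type*) [Group A] [Group Q] : A →* A ≀ᵣ Q where
  toFun a := ⟨fun _ => a, 1⟩
  map_one' := rfl
  map_mul' _ _ := by ext <;> simp

lemma wreathDiagonal_injective : Function.Injective (wreathDiagonal A Q) := fun _ _ h =>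
  congrFun (congrArg RegularWreathProduct.left h) 1

lemma wreath_pow_right (g : A ≀ᵣ Q) (j : ℕ) : (g ^ j).right = g.right ^ j :=
  map_pow RegularWreathProduct.rightHom g j

lemma wreath_pow_left_pow_right_eq_one {g : A ≀ᵣ Q} (hg : ∀ q ≠ 1, g.left q = 1) {j : ℕ}
    (hj : j < orderOf g.right) : (g ^ j).left (g.right ^ j) = 1 := by
  induction j with
  | zero => simp
  | succ j ih =>
    have hne : g.right ^ (j + 1) ≠ 1 := pow_ne_one_of_lt_orderOf j.succ_ne_zero hj
    rw [pow_succ' g, RegularWreathProduct.mul_left, Pi.mul_apply, hg _ hne, one_mul, pow_succ',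
      inv_mul_cancel_left, ih (Nat.lt_of_succ_lt hj)]

end WreathProduct

section WreathPower

variable {Q A : Type*} [Group Q] [CommGroup A]

lemma wreath_pow_left (g : A ≀ᵣ Q) (j : ℕ) (q : Q) :
    (g ^ j).left q = ∏ l ∈ Finset.range j, g.left ((g.right ^ l)⁻¹ * q) := by
  induction j with
  | zero => simp
  | succ j ih =>
    rw [pow_succ, RegularWreathProduct.mul_left, Pi.mul_apply, ih, wreath_pow_right,
      Finset.prod_range_succ]

variable [Fintype Q]

lemma prod_range_card_pow_inv_mul {c : Q} (hc : ∀ q, q ∈ Subgroup.zpowers c) (f : Q → A) (q : Q) :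
    ∏ l ∈ Finset.range (Fintype.card Q), f ((c ^ l)⁻¹ * q) = ∏ x, f x := by
  classical
  have hcard : Fintype.card Q = orderOf c := by
    rw [orderOf_eq_card_of_forall_mem_zpowers hc, Nat.card_eq_fintype_card]
  calc ∏ l ∈ Finset.range (Fintype.card Q), f ((c ^ l)⁻¹ * q)
      = ∏ x ∈ (Finset.range (orderOf c)).image (c ^ ·), f (x⁻¹ * q) := by
        rw [hcard, Finset.prod_image fun a ha b hb => pow_injOn_Iio_orderOf (by simpa using ha)
          (by simpa using hb)]
    _ = ∏ x, f (x⁻¹ * q) := by rw [IsCyclic.image_range_orderOf hc]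
    _ = ∏ x, f x := ((Equiv.inv Q).trans (Equiv.mulRight q)).prod_comp f

lemma wreath_pow_card {g : A ≀ᵣ Q} (hg : ∀ q, q ∈ Subgroup.zpowers g.right) :
    g ^ Fintype.card Q = wreathDiagonal A Q (∏ q, g.left q) := by
  ext q
  · rw [wreath_pow_left, prod_range_card_pow_inv_mul hg]
    rfl
  · rw [wreath_pow_right, pow_card_eq_one]
    rfl

lemma wreath_list_prod_zpow {n : ℕ} {k m : Fin n → ℤ} (hkm : ∀ i, k i = Fintype.card Q * m i)
    {g : Fin n → A ≀ᵣ Q} (hg : ∀ i q, q ∈ Subgroup.zpowers (g i).right) :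
    ((List.finRange n).map fun i => g i ^ k i).prod =
      wreathDiagonal A Q (∏ i, (∏ q, (g i).left q) ^ m i) := by
  have hpow (i : Fin n) : g i ^ k i = wreathDiagonal A Q ((∏ q, (g i).left q) ^ m i) := by
    rw [hkm, zpow_mul, zpow_natCast, wreath_pow_card (hg i), map_zpow]
  simp only [hpow, Fin.prod_univ_def, map_list_prod, List.map_map, Function.comp_def]

end WreathPower

section KernelEmbedding

variable {G Q A : Type*} [Group G] [Group Q] [Group A]

/-- The Krasner–Kaloujnine homomorphism from an extension of `Q` to the wreath product of the
kernel with `Q`, attached to a set-theoretic section `r`. -/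
def krasnerKaloujnine (θ : G →* Q) (r : Q → G) (hr : Function.RightInverse r θ) :
    G →* θ.ker ≀ᵣ Q where
  toFun g :=
    ⟨fun q => ⟨(r q)⁻¹ * g * r ((θ g)⁻¹ * q), by simp [MonoidHom.mem_ker, hr _]⟩, θ g⟩
  map_one' := by ext <;> simp
  map_mul' g h := by ext <;> simp [mul_assoc]

/-- The component at `1` of a homomorphism to a wreath product lying over `θ`, which is
multiplicative on the kernel of `θ`. -/
def kerComponent {θ : G →* Q} (Φ : G →* A ≀ᵣ Q) (hΦ : ∀ g, (Φ g).right = θ g) : θ.ker →* A where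
  toFun g := (Φ g).left 1
  map_one' := by simp
  map_mul' g h := by simp [hΦ, (show θ g = 1 from g.2)]

variable {θ : G →* Q} {r : Q → G} (hr : Function.RightInverse r θ)

lemma krasnerKaloujnine_left_one (hr1 : r 1 = 1) (g : θ.ker) :
    (krasnerKaloujnine θ r hr g).left 1 = g := by
  ext
  simp [krasnerKaloujnine, hr1, (show θ g = 1 from g.2)]

lemma kerComponent_krasnerKaloujnine_left {Φ : G →* A ≀ᵣ Q} (hΦ : ∀ g, (Φ g).right = θ g)
    (hnorm : ∀ q, (Φ (r q)).left q = 1) (g : G) (q : Q) :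
    kerComponent Φ hΦ ((krasnerKaloujnine θ r hr g).left q) = (Φ g).left q := by
  simp [kerComponent, krasnerKaloujnine, hΦ, hr _, hnorm]

lemma wreathMap_comp_eq_krasnerKaloujnine {ι B : Type*} [Group B] {s : ι → G}
    (hs : Subgroup.closure (Set.range s) = ⊤) {Φ : G →* A ≀ᵣ Q} (hΦ : ∀ g, (Φ g).right = θ g)
    {F : A →* B} {f : θ.ker →* B}
    (hF : ∀ i q, F ((Φ (s i)).left q) = f ((krasnerKaloujnine θ r hr (s i)).left q)) :
    (wreathMap F).comp Φ = (wreathMap f).comp (krasnerKaloujnine θ r hr) := by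
  refine MonoidHom.eq_of_eqOn_dense hs ?_
  rintro _ ⟨i, rfl⟩
  ext q
  · exact hF i q
  · exact hΦ (s i)

lemma comp_kerComponent (hr1 : r 1 = 1) {B : Type*} [Group B] {Φ : G →* A ≀ᵣ Q}
    (hΦ : ∀ g, (Φ g).right = θ g) {F : A →* B} {f : θ.ker →* B}
    (h : (wreathMap F).comp Φ = (wreathMap f).comp (krasnerKaloujnine θ r hr)) :
    F.comp (kerComponent Φ hΦ) = f := by
  ext g
  have hg := DFunLike.congr_fun h (g : G)
  have hleft := congrFun (congrArg RegularWreathProduct.left hg) 1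
  exact hleft.trans (congrArg f (krasnerKaloujnine_left_one hr hr1 g))

/-- A presentation criterion for the abelianization of the kernel of `θ`: a homomorphism `Φ` to
a wreath product `M ≀ᵣ Q` over `θ`, normalized along the section `r`, identifies it with `M` as
soon as the components of `Φ` generate `M` and the assignment of these components to those of
the Krasner–Kaloujnine homomorphism extends to a homomorphism `F`. -/
def abelianizationKerEquiv {ι M : Type*} [CommGroup M] (hr1 : r 1 = 1) {s : ι → G}
    (hs : Subgroup.closure (Set.range s) = ⊤) {Φ : G →* M ≀ᵣ Q} (hΦ : ∀ g, (Φ g).right = θ g)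
    (hnorm : ∀ q, (Φ (r q)).left q = 1)
    (hgen : Subgroup.closure (Set.range fun p : ι × Q => (Φ (s p.1)).left p.2) = ⊤)
    (F : M →* Abelianization θ.ker)
    (hF : ∀ i q, F ((Φ (s i)).left q) =
      Abelianization.of ((krasnerKaloujnine θ r hr (s i)).left q)) :
    Abelianization θ.ker ≃* M :=
  MonoidHom.toMulEquiv (Abelianization.lift (kerComponent Φ hΦ)) F
    (Abelianization.hom_ext _ _ <|
      comp_kerComponent hr hr1 hΦ (wreathMap_comp_eq_krasnerKaloujnine hr hs hΦ hF))
    (by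
      refine MonoidHom.eq_of_eqOn_dense hgen ?_
      rintro _ ⟨⟨i, q⟩, rfl⟩
      simp only [MonoidHom.comp_apply, hF, Abelianization.lift_apply_of, MonoidHom.id_apply,
        kerComponent_krasnerKaloujnine_left hr hΦ hnorm])

end KernelEmbedding

section CyclicSection

variable {G : Type*} [Group G] {N : ℕ}

/-- The section `c ^ j ↦ t ^ j`, `0 ≤ j < N`, of a homomorphism sending `t` to the generator `c`
of the cyclic group of order `N`. -/
def cyclicSection (t : G) (q : Multiplicative (ZMod N)) : G :=
  t ^ q.toAdd.val

lemma cyclicSection_one (t : G) : cyclicSection t (1 : Multiplicative (ZMod N)) = 1 := by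
  simp [cyclicSection]

variable [NeZero N]

lemma ofAdd_one_pow_val (q : Multiplicative (ZMod N)) :
    Multiplicative.ofAdd (1 : ZMod N) ^ q.toAdd.val = q := by
  simp [← ofAdd_nsmul]

lemma mem_zpowers_ofAdd_one (q : Multiplicative (ZMod N)) :
    q ∈ Subgroup.zpowers (Multiplicative.ofAdd (1 : ZMod N)) :=
  ⟨q.toAdd.val, (zpow_natCast _ _).trans (ofAdd_one_pow_val q)⟩

lemma rightInverse_cyclicSection {θ : G →* Multiplicative (ZMod N)} {t : G}
    (ht : θ t = .ofAdd 1) : Function.RightInverse (cyclicSection t) θ := fun q => by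
  rw [cyclicSection, map_pow, ht, ofAdd_one_pow_val]

lemma cyclicSection_eq_mul (t : G) {q : Multiplicative (ZMod N)} (hq : q ≠ 1) :
    cyclicSection t q = t * cyclicSection t ((.ofAdd 1)⁻¹ * q) := by
  have hpos : 0 < q.toAdd.val := ZMod.val_pos.2 hq
  have hval : (-1 + q.toAdd).val = q.toAdd.val - 1 := by
    have hN : 1 < N := lt_of_le_of_lt hpos (ZMod.val_lt _)
    have hone : (1 : ZMod N).val = 1 := by rw [ZMod.val_one_eq_one_mod, Nat.mod_eq_of_lt hN]
    rw [neg_add_eq_sub, ZMod.val_sub (hone.trans_le hpos), hone]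
  rw [cyclicSection, cyclicSection, toAdd_mul, toAdd_inv, toAdd_ofAdd, hval, ← pow_succ',
    Nat.sub_add_cancel hpos]

lemma krasnerKaloujnine_cyclicSection_left {θ : G →* Multiplicative (ZMod N)} {t : G}
    (ht : θ t = .ofAdd 1) {q : Multiplicative (ZMod N)} (hq : q ≠ 1) :
    (krasnerKaloujnine θ _ (rightInverse_cyclicSection ht) t).left q = 1 := by
  ext
  simp [krasnerKaloujnine, ht, cyclicSection_eq_mul t hq]

lemma map_cyclicSection_left {A : Type*} [Group A] {Φ : G →* A ≀ᵣ Multiplicative (ZMod N)} {t : G}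
    (ht : (Φ t).right = .ofAdd 1) (hΦ : ∀ q ≠ 1, (Φ t).left q = 1) (q : Multiplicative (ZMod N)) :
    (Φ (cyclicSection t q)).left q = 1 := by
  have hlt : q.toAdd.val < orderOf (Φ t).right := by
    rw [ht, orderOf_ofAdd_eq_addOrderOf, ZMod.addOrderOf_one]
    exact ZMod.val_lt _
  have h := wreath_pow_left_pow_right_eq_one hΦ hlt
  rwa [ht, ofAdd_one_pow_val, ← map_pow] at h

end CyclicSection

section QuotientBySpan

variable {R M : Type*} [CommRing R] [AddCommGroup M] [Module R M]

/-- The projection of `M` onto the kernel of `φ` along a vector `u` with `φ u = 1`. -/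
def kerProjection (φ : M →ₗ[R] R) {u : M} (hu : φ u = 1) : M →ₗ[R] LinearMap.ker φ :=
  (LinearMap.id - φ.smulRight u).codRestrict _ fun x => by simp [hu]

lemma coe_kerProjection {φ : M →ₗ[R] R} {u : M} (hu : φ u = 1) (x : M) :
    (kerProjection φ hu x : M) = x - φ x • u := rfl

lemma kerProjection_eq_zero_iff {φ : M →ₗ[R] R} {u : M} (hu : φ u = 1) {x : M} :
    kerProjection φ hu x = 0 ↔ x = φ x • u := by
  rw [← Submodule.coe_eq_zero, coe_kerProjection, sub_eq_zero]

lemma ker_kerProjection_prod_mkQ {φ : M →ₗ[R] R} {u : M} (hu : φ u = 1) (a : R) :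
    LinearMap.ker ((kerProjection φ hu).prod ((Ideal.span {a}).mkQ ∘ₗ φ)) =
      Submodule.span R {a • u} := by
  ext x
  simp only [LinearMap.mem_ker, LinearMap.prod_apply, Function.prod, Prod.mk_eq_zero,
    kerProjection_eq_zero_iff, LinearMap.comp_apply, Submodule.mkQ_apply,
    Submodule.Quotient.mk_eq_zero, Ideal.mem_span_singleton', Submodule.mem_span_singleton]
  constructor
  · rintro ⟨hx, b, hb⟩
    exact ⟨b, by rw [smul_smul, hb, ← hx]⟩
  · rintro ⟨b, rfl⟩
    simp [hu, mul_smul]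

lemma kerProjection_prod_mkQ_surjective {φ : M →ₗ[R] R} {u : M} (hu : φ u = 1) (I : Ideal R) :
    Function.Surjective ((kerProjection φ hu).prod (I.mkQ ∘ₗ φ)) := by
  rintro ⟨w, b⟩
  obtain ⟨b, rfl⟩ := I.mkQ_surjective b
  have hw : φ w = 0 := w.2
  refine ⟨w + b • u, Prod.ext (Subtype.ext ?_) ?_⟩ <;> simp [coe_kerProjection, hu, hw]

/-- If `φ u = 1`, then `M` is the direct sum of `ker φ` and the free module on `u`, whence
the structure of its quotient by a multiple of `u`. -/
noncomputable def quotientSpanSMulEquiv (φ : M →ₗ[R] R) {u : M} (hu : φ u = 1) (a : R) :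
    (M ⧸ Submodule.span R {a • u}) ≃ₗ[R] LinearMap.ker φ × (R ⧸ Ideal.span {a}) :=
  (Submodule.quotEquivOfEq _ _ (ker_kerProjection_prod_mkQ hu a).symm).trans
    (LinearMap.quotKerEquivOfSurjective _ (kerProjection_prod_mkQ_surjective hu _))

lemma finrank_ker_of_surjective [IsDomain R] [Module.Finite R M] {φ : M →ₗ[R] R}
    (hφ : Function.Surjective φ) :
    Module.finrank R (LinearMap.ker φ) = Module.finrank R M - 1 := by
  have h := (LinearMap.ker φ).finrank_quotient_add_finrank
  rw [(φ.quotKerEquivOfSurjective hφ).finrank_eq, Module.finrank_self] at h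
  exact Nat.eq_sub_of_add_eq' h

lemma exists_eq_gcd_smul_unimodular {J : Type*} [Fintype J] [Nonempty J] (w : J → ℤ) :
    ∃ (u : J → ℤ) (φ : (J → ℤ) →ₗ[ℤ] ℤ), w = Finset.univ.gcd w • u ∧ φ u = 1 := by
  obtain ⟨u, hw, hu⟩ := Finset.extract_gcd w Finset.univ_nonempty
  obtain ⟨c, hc⟩ := Finset.gcd_eq_sum_mul Finset.univ u
  refine ⟨u, Fintype.linearCombination ℤ c, funext fun j => hw j (Finset.mem_univ j), ?_⟩
  rw [← hu, hc]
  rfl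

theorem nonempty_quotient_span_singleton_addEquiv {J : Type*} [Fintype J] [Nonempty J]
    {w : J → ℤ} {d : ℕ} (hw : Finset.univ.gcd w = d) :
    Nonempty (((J → ℤ) ⧸ Submodule.span ℤ {w}) ≃+ (Fin (Fintype.card J - 1) → ℤ) × ZMod d) := by
  obtain ⟨u, φ, hu, hφ⟩ := exists_eq_gcd_smul_unimodular w
  have hsurj : Function.Surjective φ := fun b => ⟨b • u, by rw [map_smul, hφ, smul_eq_mul, mul_one]⟩
  let e : LinearMap.ker φ ≃ₗ[ℤ] (Fin (Fintype.card J - 1) → ℤ) :=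
    LinearEquiv.ofFinrankEq _ _ (by rw [finrank_ker_of_surjective hsurj]; simp)
  rw [hu, hw]
  exact ⟨(quotientSpanSMulEquiv φ hφ d).toAddEquiv.trans
    (e.toAddEquiv.prodCongr (Int.quotientSpanNatEquivZMod d).toAddEquiv)⟩

end QuotientBySpan

/-- The abelian group, written multiplicatively, generated by `P` subject to the relations `p = 1`
for `p ∉ J` and `∏ p, p ^ v p = 1`, encoded as a quotient of the free abelian group on `J`. -/
abbrev OneRelation {P : Type*} (J : Finset P) (v : P → ℤ) : Type _ :=
  Multiplicative ((J → ℤ) ⧸ Submodule.span ℤ {fun p : J => v p})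

namespace OneRelation

variable {P A : Type*} {J : Finset P} {v : P → ℤ} [CommGroup A]

variable (J v) in
/-- The projection from the free abelian group on all of `P`, written additively. -/
def proj : (P → ℤ) →ₗ[ℤ] (J → ℤ) ⧸ Submodule.span ℤ {fun p : J => v p} :=
  Submodule.mkQ (Submodule.span ℤ {fun p : J => v p}) ∘ₗ LinearMap.funLeft ℤ ℤ ((↑) : J → P)

lemma proj_surjective : Function.Surjective (proj J v) :=
  (Submodule.mkQ_surjective _).comp
    (LinearMap.funLeft_surjective_of_injective ℤ ℤ _ Subtype.val_injective)

lemma proj_self : proj J v v = 0 :=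
  (Submodule.Quotient.mk_eq_zero _).2 (Submodule.mem_span_singleton_self _)

lemma prod_coe_zpow_eq_one [Fintype P] {y : P → A} (hy : ∀ p ∉ J, y p = 1)
    (hv : ∏ p, y p ^ v p = 1) : ∏ p : J, y p ^ v p = 1 := by
  rw [Finset.prod_coe_sort J fun p => y p ^ v p, ← hv]
  exact Finset.prod_subset (Finset.subset_univ J) fun p _ hp => by rw [hy p hp, one_zpow]

variable [DecidableEq P]

lemma funLeft_single (p : P) : LinearMap.funLeft ℤ ℤ ((↑) : J → P) (Pi.single p 1) =
    if h : p ∈ J then Pi.single ⟨p, h⟩ 1 else 0 := by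
  ext j
  split_ifs with h
  · simp [LinearMap.funLeft_apply, Pi.single_apply, Subtype.ext_iff]
  · exact Pi.single_eq_of_ne (fun hj : (j : P) = p => h (hj ▸ j.2)) _

variable (J v) in
/-- The class of the generator `p`. -/
def gen (p : P) : OneRelation J v :=
  .ofAdd (proj J v (Pi.single p 1))

lemma gen_eq_one {p : P} (hp : p ∉ J) : gen J v p = 1 := by
  rw [gen, proj, LinearMap.comp_apply, funLeft_single, dif_neg hp, map_zero, ofAdd_zero]

lemma closure_range_gen [Finite P] : Subgroup.closure (Set.range (gen J v)) = ⊤ := by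
  have hspan : Submodule.span ℤ (Set.range fun p => proj J v (Pi.single p 1)) = ⊤ := by
    simp only [← Pi.basisFun_apply]
    rw [Set.range_comp', Submodule.span_image, (Pi.basisFun ℤ P).span_eq, Submodule.map_top,
      LinearMap.range_eq_top.2 proj_surjective]
  have hclosure : AddSubgroup.closure (Set.range fun p => proj J v (Pi.single p 1)) = ⊤ := by
    rw [← Submodule.span_int_eq_addSubgroupClosure, hspan, Submodule.top_toAddSubgroup]
  have h := AddSubgroup.toSubgroup_closure (Set.range fun p => proj J v (Pi.single p 1))
  rw [hclosure, map_top] at h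
  exact h.symm

variable [Fintype P]

lemma proj_apply (a : P → ℤ) : proj J v a = ∑ p, a p • proj J v (Pi.single p 1) := by
  conv_lhs => rw [pi_eq_sum_univ' a]
  simp only [map_sum, map_smul]

lemma prod_gen_zpow : ∏ p, gen J v p ^ v p = 1 := by
  simp only [gen, ← ofAdd_zsmul, ← ofAdd_sum]
  rw [← proj_apply, proj_self, ofAdd_zero]

/-- The universal property of `OneRelation J v`. -/
def lift (y : P → A) (hy : ∀ p ∉ J, y p = 1) (hv : ∏ p, y p ^ v p = 1) : OneRelation J v →* A :=
  AddMonoidHom.toMultiplicativeLeft <| LinearMap.toAddMonoidHom <|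
    Submodule.liftQ _ (Fintype.linearCombination ℤ fun p : J => Additive.ofMul (y p)) <| by
      rw [Submodule.span_singleton_le_iff_mem, LinearMap.mem_ker,
        Fintype.linearCombination_apply]
      exact congrArg Additive.ofMul (prod_coe_zpow_eq_one (A := A) hy hv)

lemma lift_gen {y : P → A} (hy : ∀ p ∉ J, y p = 1) (hv : ∏ p, y p ^ v p = 1) (p : P) :
    lift y hy hv (gen J v p) = y p := by
  by_cases hp : p ∈ J
  · have h : Fintype.linearCombination ℤ (fun j : J => Additive.ofMul (y j))
        (LinearMap.funLeft ℤ ℤ ((↑) : J → P) (Pi.single p 1)) = Additive.ofMul (y p) := by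
      rw [funLeft_single, dif_pos hp, Fintype.linearCombination_apply_single, one_smul]
    exact congrArg Additive.toMul h
  · rw [gen_eq_one hp, map_one, hy p hp]

end OneRelation

lemma prod_zpow_eq_prod_prod_zpow {ι Q A : Type*} [Fintype ι] [Fintype Q] [CommGroup A]
    (x : ι → Q → A) (m : ι → ℤ) :
    ∏ p : ι × Q, x p.1 p.2 ^ m p.1 = ∏ i, (∏ q, x i q) ^ m i := by
  simp only [Fintype.prod_prod_type, Finset.prod_zpow]

namespace Meskin

variable {n : ℕ} {k m : Fin n → ℤ} {N : ℕ}

lemma map_meskinRel {G : Type*} [Group G] (f : FreeGroup (Fin n) →* G) :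
    f (MeskinRel n k) = ((List.finRange n).map fun i => f (.of i) ^ k i).prod := by
  simp only [MeskinRel, map_list_prod, List.map_map, Function.comp_def, map_zpow]

lemma list_prod_map_of_zpow {G : Type*} [Group G] (f : Meskin n k →* G) :
    ((List.finRange n).map fun i => f (PresentedGroup.of i) ^ k i).prod = 1 :=
  calc ((List.finRange n).map fun i => f (PresentedGroup.of i) ^ k i).prod
      = f (PresentedGroup.mk _ (MeskinRel n k)) :=
        (map_meskinRel (f.comp (PresentedGroup.mk {MeskinRel n k}))).symm
    _ = 1 := by rw [PresentedGroup.one_of_mem (Set.mem_singleton _), map_one]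

variable [NeZero N]

section Wreath

variable {A : Type*} [CommGroup A] (hkm : ∀ i, k i = N * m i)

include hkm

lemma prod_left_zpow_eq_one (Φ : Meskin n k →* A ≀ᵣ Multiplicative (ZMod N))
    (hΦ : ∀ i, (Φ (PresentedGroup.of i)).right = .ofAdd 1) :
    ∏ i, (∏ q, (Φ (PresentedGroup.of i)).left q) ^ m i = 1 := by
  apply wreathDiagonal_injective (Q := Multiplicative (ZMod N))
  rw [map_one, ← list_prod_map_of_zpow Φ]
  refine (wreath_list_prod_zpow ?_ fun i q => ?_).symm
  · simpa [ZMod.card] using hkm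
  · rw [hΦ]
    exact mem_zpowers_ofAdd_one q

/-- The homomorphism `s_i ↦ (x_i, c)` from the Meskin group to the wreath product with the cyclic
group of order `N` generated by `c`. -/
def toWreath (x : Fin n → Multiplicative (ZMod N) → A) (hx : ∏ i, (∏ q, x i q) ^ m i = 1) :
    Meskin n k →* A ≀ᵣ Multiplicative (ZMod N) :=
  PresentedGroup.toGroup (f := fun i => ⟨x i, .ofAdd 1⟩) <| by
    rintro _ rfl
    simp only [map_meskinRel, FreeGroup.lift_apply_of]
    rw [wreath_list_prod_zpow (by simpa [ZMod.card] using hkm) fun _ => mem_zpowers_ofAdd_one,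
      hx, map_one]

lemma toWreath_of (x : Fin n → Multiplicative (ZMod N) → A)
    (hx : ∏ i, (∏ q, x i q) ^ m i = 1) (i : Fin n) :
    toWreath hkm x hx (PresentedGroup.of i) = ⟨x i, .ofAdd 1⟩ :=
  PresentedGroup.toGroup.of _

end Wreath

/-- The Schreier generators `s_j` at coset `q` that are not killed when the powers of
`s_i` are used as coset representatives. -/
def schreierIndices (N : ℕ) [NeZero N] (i : Fin n) : Finset (Fin n × Multiplicative (ZMod N)) :=
  ({i} ×ˢ {1}ᶜ)ᶜ

lemma mem_schreierIndices {i j : Fin n} {q : Multiplicative (ZMod N)} :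
    (j, q) ∈ schreierIndices N i ↔ (j = i → q = 1) := by
  simp only [schreierIndices, Finset.mem_compl, Finset.mem_product, Finset.mem_singleton, not_and,
    not_not]

lemma card_schreierIndices (i : Fin n) : (schreierIndices N i).card = N * n - N + 1 := by
  have hle : N ≤ N * n := Nat.le_mul_of_pos_right N i.pos
  have hN : 0 < N := NeZero.pos N
  rw [schreierIndices, Finset.card_compl, Finset.card_product, Finset.card_compl]
  simp only [Fintype.card_prod, Fintype.card_fin, Fintype.card_multiplicative, ZMod.card,
    Finset.card_singleton, one_mul, mul_comm n]
  omega

lemma gcd_schreierIndices (i : Fin n) :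
    (Finset.univ.gcd fun p : schreierIndices N i => m p.1.1) = Finset.univ.gcd m := by
  have hsurj : Function.Surjective fun p : schreierIndices N i => p.1.1 := fun j =>
    ⟨⟨(j, 1), mem_schreierIndices.2 fun _ => rfl⟩, rfl⟩
  rw [← Finset.image_univ_of_surjective hsurj, Finset.gcd_image]
  rfl

/-- The abelian group on Schreier generators `x_{j,q}` with the relations `x_{i,q} = 1` for
`q ≠ 1` and `∏ x_{j,q} ^ m_j = 1`. -/
abbrev SchreierQuotient (N : ℕ) [NeZero N] (m : Fin n → ℤ) (i : Fin n) : Type :=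
  OneRelation (schreierIndices N i) fun p => m p.1

section Kernel

variable (hkm : ∀ i, k i = N * m i) (i : Fin n)

/-- The homomorphism from the Meskin group to the wreath product of `SchreierQuotient N m i` with
the cyclic group of order `N` given by the generators of `SchreierQuotient N m i`. -/
def schreierHom : Meskin n k →* SchreierQuotient N m i ≀ᵣ Multiplicative (ZMod N) :=
  toWreath hkm (fun j q => OneRelation.gen _ _ (j, q)) <| by
    rw [← prod_zpow_eq_prod_prod_zpow]
    exact OneRelation.prod_gen_zpow

lemma schreierHom_of (j : Fin n) : schreierHom hkm i (PresentedGroup.of j) =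
    ⟨fun q => OneRelation.gen _ _ (j, q), .ofAdd 1⟩ :=
  toWreath_of ..

lemma schreierHom_of_left (j : Fin n) (q : Multiplicative (ZMod N)) :
    (schreierHom hkm i (PresentedGroup.of j)).left q = OneRelation.gen _ _ (j, q) := by
  rw [schreierHom_of]

lemma schreierHom_cyclicSection_left (q : Multiplicative (ZMod N)) :
    (schreierHom hkm i (cyclicSection (PresentedGroup.of i) q)).left q = 1 := by
  refine map_cyclicSection_left (by rw [schreierHom_of]) (fun q hq => ?_) q
  rw [schreierHom_of_left]
  exact OneRelation.gen_eq_one fun h => hq (mem_schreierIndices.1 h rfl)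

lemma closure_range_schreierHom_left :
    Subgroup.closure (Set.range fun p : Fin n × Multiplicative (ZMod N) =>
      (schreierHom hkm i (PresentedGroup.of p.1)).left p.2) = ⊤ := by
  simp only [schreierHom_of_left]
  exact OneRelation.closure_range_gen

variable {θ : Meskin n k →* Multiplicative (ZMod N)} (hθ : ∀ i, θ (PresentedGroup.of i) = .ofAdd 1)

include hθ in
lemma schreierHom_right (g : Meskin n k) : (schreierHom hkm i g).right = θ g := by
  have h : RegularWreathProduct.rightHom.comp (schreierHom hkm i) = θ :=
    PresentedGroup.ext fun j => by
      rw [hθ, MonoidHom.comp_apply, schreierHom_of]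
      rfl
  exact DFunLike.congr_fun h g

/-- The class of the Schreier generator `t^{-q} s_j t^{q-1}` of `ker θ`, where `t = s_i`. -/
def schreierGen (p : Fin n × Multiplicative (ZMod N)) : Abelianization θ.ker :=
  .of ((krasnerKaloujnine θ _ (rightInverse_cyclicSection (hθ i)) (PresentedGroup.of p.1)).left p.2)

lemma schreierGen_eq_one {p : Fin n × Multiplicative (ZMod N)} (hp : p ∉ schreierIndices N i) :
    schreierGen i hθ p = 1 := by
  obtain ⟨j, q⟩ := p
  rw [mem_schreierIndices, Classical.not_imp] at hp
  obtain ⟨rfl, hq⟩ := hp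
  rw [schreierGen, krasnerKaloujnine_cyclicSection_left (hθ j) hq, map_one]

include hkm in
lemma prod_schreierGen_zpow : ∏ p, schreierGen i hθ p ^ m p.1 = 1 := by
  rw [prod_zpow_eq_prod_prod_zpow fun j q => schreierGen i hθ (j, q)]
  exact prod_left_zpow_eq_one hkm ((wreathMap Abelianization.of).comp
    (krasnerKaloujnine θ _ (rightInverse_cyclicSection (hθ i)))) hθ

/-- The homomorphism from `SchreierQuotient N m i` sending each generator to the corresponding
Schreier generator of `ker θ`. -/
def ofSchreierQuotient : SchreierQuotient N m i →* Abelianization θ.ker :=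
  OneRelation.lift (schreierGen i hθ) (fun _ => schreierGen_eq_one i hθ)
    (prod_schreierGen_zpow hkm i hθ)

lemma ofSchreierQuotient_gen (p : Fin n × Multiplicative (ZMod N)) :
    ofSchreierQuotient hkm i hθ (OneRelation.gen _ _ p) = schreierGen i hθ p :=
  OneRelation.lift_gen ..

/-- The Reidemeister–Schreier presentation of the abelianization of `ker θ`. -/
def abelianizationKerEquivSchreierQuotient : Abelianization θ.ker ≃* SchreierQuotient N m i :=
  abelianizationKerEquiv (rightInverse_cyclicSection (hθ i)) (cyclicSection_one _)
    (PresentedGroup.closure_range_of _) (schreierHom_right hkm i hθ)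
    (schreierHom_cyclicSection_left hkm i) (closure_range_schreierHom_left hkm i)
    (ofSchreierQuotient hkm i hθ) fun j q => by
      rw [schreierHom_of_left, ofSchreierQuotient_gen, schreierGen]

include i hθ in
lemma index_ker : θ.ker.index = N := by
  rw [Subgroup.index_ker,
    MonoidHom.range_eq_top.2 (rightInverse_cyclicSection (hθ i)).surjective, Subgroup.card_top]
  exact Nat.card_zmod N

end Kernel

end Meskin

theorem stmt_18_general {n : ℕ} (hn : 0 < n) (k : Fin n → ℤ) {N d : ℕ} [NeZero N]
    (hgcd : Finset.univ.gcd k = N * d) (θ : Meskin n k →* Multiplicative (ZMod N))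
    (hθ : ∀ i, θ (PresentedGroup.of i) = Multiplicative.ofAdd 1) :
    (MonoidHom.ker θ).index = N ∧
      Nonempty (Abelianization ↥(MonoidHom.ker θ) ≃*
        Multiplicative ((Fin (N * n - N) → ℤ) × ZMod d)) := by
  let i : Fin n := ⟨0, hn⟩
  have hdvd (j : Fin n) : (N : ℤ) ∣ k j :=
    (Dvd.intro _ hgcd.symm).trans (Finset.gcd_dvd (Finset.mem_univ j))
  choose m hkm using hdvd
  have hm : Finset.univ.gcd m = d := by
    rw [funext hkm, Finset.gcd_mul_left, Int.normalize_coe_nat] at hgcd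
    exact mul_left_cancel₀ (NeZero.ne _) hgcd
  have : Nonempty (Meskin.schreierIndices N i) :=
    ⟨(i, 1), Meskin.mem_schreierIndices.2 fun _ => rfl⟩
  obtain ⟨e⟩ := nonempty_quotient_span_singleton_addEquiv
    ((Meskin.gcd_schreierIndices (N := N) i).trans hm)
  rw [Fintype.card_coe, Meskin.card_schreierIndices, Nat.add_sub_cancel] at e
  exact ⟨Meskin.index_ker i hθ,
    ⟨(Meskin.abelianizationKerEquivSchreierQuotient hkm i hθ).trans e.toMultiplicative⟩⟩

theorem stmt_18 (n : ℕ) (hn : 2 ≤ n) (k : Fin n → ℤ) (hk : ∀ i, 1 ≤ k i)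
    (hgcd : Finset.univ.gcd k = 2)
    (θ : Meskin n k →* Multiplicative (ZMod 2))
    (hθ : ∀ i, θ (PresentedGroup.of i) = Multiplicative.ofAdd 1) :
    (MonoidHom.ker θ).index = 2 ∧
      Nonempty (Abelianization ↥(MonoidHom.ker θ) ≃*
        Multiplicative (Fin (2 * n - 2) → ℤ)) := by
  obtain ⟨hindex, ⟨e⟩⟩ := stmt_18_general (N := 2) (d := 1) (by omega : 0 < n) k (by simpa) θ hθ
  exact ⟨hindex, ⟨e.trans AddEquiv.prodUnique.toMultiplicative⟩⟩
end
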